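/- Rounding comparison: for every valid date D and every period p = (py, pm, pd), one has D +↓ p ≤ D +↑ p. -/

import Mathlib

/-- A value is either a date `(y, m, d)` (a triple of integers in the
Gregorian calendar) or the error element `⊥`. -/
inductive DValue : Type
  | date (y m d : ℤ) : DValue
  | bot : DValue
deriving DecidableEq

/-- `nb_days(y, m)`: the number of days of month `m` in year `y`
(meaningful for `1 ≤ m ≤ 12`). A year is leap iff it is divisible by 4
and not by 100, or divisible by 400. -/
def nbDays (y m : ℤ) : ℤ :=
  if m = 2 then (if (4 ∣ y ∧ ¬ (100 ∣ y)) ∨ 400 ∣ y then 29 else 28)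
  else if m = 4 ∨ m = 6 ∨ m = 9 ∨ m = 11 then 30
  else 31

theorem nbDays_bounds (y m : ℤ) : 28 ≤ nbDays y m ∧ nbDays y m ≤ 31 := by
  unfold nbDays; split_ifs <;> omega

/-- A date `(y, m, d)` is valid iff `1 ≤ m ≤ 12` and `1 ≤ d ≤ nb_days(y, m)`. -/
def ValidDate (y m d : ℤ) : Prop :=
  1 ≤ m ∧ m ≤ 12 ∧ 1 ≤ d ∧ d ≤ nbDays y m

/-- Year addition: `(y,m,d) +y n = (y+n,m,d)`; `⊥ +y n = ⊥`. -/
def DValue.addY : DValue → ℤ → DValue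
  | .date y m d, n => .date (y + n) m d
  | .bot, _ => .bot

/-- Month addition on a date `(y, m, d)` (with `⊥` for a month component
outside `[1,12]`):
`(y,m,d) +m n = (y,m+n,d)` if `1 ≤ m+n ≤ 12`,
`= (y+1,m,d) +m (n−12)` if `m+n > 12`, `= (y−1,m,d) +m (n+12)` if `m+n < 1`. -/
def addMonths (y m d n : ℤ) : DValue :=
  if _h : 1 ≤ m ∧ m ≤ 12 then
    if _h1 : 1 ≤ m + n ∧ m + n ≤ 12 then .date y (m + n) d
    else if _h2 : 12 < m + n then addMonths (y + 1) m d (n - 12)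
    else addMonths (y - 1) m d (n + 12)
  else .bot
termination_by (m + n - 12).toNat + (1 - (m + n)).toNat
decreasing_by all_goals omega

/-- Month addition on values: `⊥ +m n = ⊥`. -/
def DValue.addM : DValue → ℤ → DValue
  | .date y m d, n => addMonths y m d n
  | .bot, _ => .bot

/-- Day addition, following the rules:
for `(y,m,d)` with `1 ≤ d ≤ nb_days(y,m)`:
`(y,m,d) +d n = (y,m,d+n)` if `1 ≤ d+n ≤ nb_days(y,m)`;
`= ((y,m,1) +m 1) +d (n − (nb_days(y,m) − d) − 1)` if `d+n > nb_days(y,m)`;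
`= (y,m,1) +d (d−1+n)` if `d+n ≤ 0` and `d > 1`;
if `n+1 ≤ 0` then, letting `(y',m',d') = (y,m,1) +m (−1)`,
`(y,m,1) +d n = (y',m',1) +d (n + nb_days(y',m'))`.
If `d < 1` or `d > nb_days(y,m)` (or the month is out of range), the result is `⊥`. -/
def addDays (y m d n : ℤ) : DValue :=
  if _hm : 1 ≤ m ∧ m ≤ 12 then
    if _hd : 1 ≤ d ∧ d ≤ nbDays y m then
      if _h1 : 1 ≤ d + n ∧ d + n ≤ nbDays y m then .date y m (d + n)
      else if _h2 : nbDays y m < d + n then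
        match addMonths y m 1 1 with
        | .date y' m' _ => addDays y' m' 1 (n - (nbDays y m - d) - 1)
        | .bot => .bot
      else if _h3 : 1 < d then addDays y m 1 (d - 1 + n)
      else
        match _hprev : addMonths y m 1 (-1) with
        | .date y' m' _ => addDays y' m' 1 (n + nbDays y' m')
        | .bot => .bot
    else .bot
  else .bot
termination_by (if 0 ≤ n then n else 62 - n).toNat
decreasing_by
  · split_ifs <;> omega
  · split_ifs <;> omega
  · have h28 := nbDays_bounds y' m'
    split_ifs <;> omega

/-- Day addition on values: `⊥ +d n = ⊥`. -/
def DValue.addD : DValue → ℤ → DValue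
  | .date y m d, n => addDays y m d n
  | .bot, _ => .bot

/-- Rounding modes: down (`↓`), up (`↑`) and error (`⊥`). -/
inductive RMode : Type
  | down | up | err
deriving DecidableEq

/-- Rounding `rnd_r`: if `1 ≤ d ≤ nb_days(y,m)` then `rnd_r(y,m,d) = (y,m,d)`;
if `d > nb_days(y,m)` then `rnd_↓(y,m,d) = (y,m,nb_days(y,m))`,
`rnd_↑(y,m,d) = (y',m',1)` where `(y',m',d') = (y,m,d) +m 1`, and
`rnd_⊥(y,m,d) = ⊥`; if `d < 1` then `rnd_r(y,m,d) = ⊥`; `rnd_r(⊥) = ⊥`. -/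
def rnd (r : RMode) : DValue → DValue
  | .date y m d =>
    if 1 ≤ d ∧ d ≤ nbDays y m then .date y m d
    else if d < 1 then .bot
    else
      match r with
      | .down => .date y m (nbDays y m)
      | .up =>
        match addMonths y m d 1 with
        | .date y' m' _ => .date y' m' 1
        | .bot => .bot
      | .err => .bot
  | .bot => .bot

/-- A period `(py, pm, pd)`: a number of years, months and days. -/
structure Period : Type where
  py : ℤ
  pm : ℤ
  pd : ℤ
deriving DecidableEq

/-- Derived addition of a period with rounding mode `r`:
`e +r (py, pm, pd) = rnd_r((e +y py) +m pm) +d pd`. -/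
def addPeriod (r : RMode) (e : DValue) (p : Period) : DValue :=
  ((rnd r ((e.addY p.py).addM p.pm)).addD p.pd)

/-- Strict lexicographic order on dates. -/
def DateLt (y1 m1 d1 y2 m2 d2 : ℤ) : Prop :=
  y1 < y2 ∨ (y1 = y2 ∧ (m1 < m2 ∨ (m1 = m2 ∧ d1 < d2)))

/-- Large lexicographic order on dates. -/
def DateLe (y1 m1 d1 y2 m2 d2 : ℤ) : Prop :=
  y1 < y2 ∨ (y1 = y2 ∧ (m1 < m2 ∨ (m1 = m2 ∧ d1 ≤ d2)))

/-- Comparison lifted to values: it holds only between two dates. -/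
def DValue.lt : DValue → DValue → Prop
  | .date y1 m1 d1, .date y2 m2 d2 => DateLt y1 m1 d1 y2 m2 d2
  | _, _ => False

/-- Comparison lifted to values: it holds only between two dates. -/
def DValue.le : DValue → DValue → Prop
  | .date y1 m1 d1, .date y2 m2 d2 => DateLe y1 m1 d1 y2 m2 d2
  | _, _ => False

/-- A value is a valid date: it is not `⊥` and its components are valid. -/
def IsValidDate : DValue → Prop
  | .date y m d => ValidDate y m d
  | .bot => False

def yearOf : DValue → ℤ
  | .date y _ _ => y
  | .bot => 0

def monthOf : DValue → ℤ
  | .date _ m _ => m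
  | .bot => 0

def dayOf : DValue → ℤ
  | .date _ _ d => d
  | .bot => 0

/-- Date units: year, month, day. -/
inductive DUnit : Type
  | year | month | day
deriving DecidableEq

/-- Addition of `n` units to a value. -/
def addU : DUnit → DValue → ℤ → DValue
  | .year, v, n => v.addY n
  | .month, v, n => v.addM n
  | .day, v, n => v.addD n

/-- Componentwise addition of periods. -/
def Period.add (p q : Period) : Period :=
  ⟨p.py + q.py, p.pm + q.pm, p.pd + q.pd⟩

theorem addMonths_one (y m d : ℤ) (h : 1 ≤ m ∧ m ≤ 12) :
    addMonths y m d 1 = if m = 12 then .date (y+1) 1 d else .date y (m+1) d := by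
  rw [addMonths, dif_pos h]
  by_cases hm : m = 12
  · subst hm
    rw [addMonths]
    norm_num
  · rw [dif_pos (by omega), if_neg hm]

theorem addMonths_neg_one (y m d : ℤ) (h : 1 ≤ m ∧ m ≤ 12) :
    addMonths y m d (-1) = if m = 1 then .date (y-1) 12 d else .date y (m-1) d := by
  rw [addMonths, dif_pos h]
  by_cases hm : m = 1
  · subst hm
    norm_num
    rw [addMonths]
    norm_num
  · rw [dif_pos (by omega), if_neg hm]
    rfl

theorem addMonths_ex (y m d n : ℤ) (h : 1 ≤ m ∧ m ≤ 12) :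
    ∃ y' m', addMonths y m d n = .date y' m' d ∧ 1 ≤ m' ∧ m' ≤ 12 := by
  fun_induction addMonths y m d n with
  | case1 y n _ h1 => exact ⟨_, _, rfl, h1⟩
  | case2 y n _ h1 h2 ih => exact ih
  | case3 y n _ h1 h2 ih => exact ih
  | case4 y n h' => exact absurd h h'

def nxtY (y m : ℤ) : ℤ := if m = 12 then y + 1 else y
def nxtM (m : ℤ) : ℤ := if m = 12 then 1 else m + 1
def prvY (y m : ℤ) : ℤ := if m = 1 then y - 1 else y
def prvM (m : ℤ) : ℤ := if m = 1 then 12 else m - 1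

theorem am_nxt (y m d : ℤ) (h : 1 ≤ m ∧ m ≤ 12) :
    addMonths y m d 1 = .date (nxtY y m) (nxtM m) d := by
  rw [addMonths_one y m d h, nxtY, nxtM]; split_ifs <;> rfl

theorem am_prv (y m d : ℤ) (h : 1 ≤ m ∧ m ≤ 12) :
    addMonths y m d (-1) = .date (prvY y m) (prvM m) d := by
  rw [addMonths_neg_one y m d h, prvY, prvM]; split_ifs <;> rfl

theorem nxtM_ok (m : ℤ) (h : 1 ≤ m ∧ m ≤ 12) : 1 ≤ nxtM m ∧ nxtM m ≤ 12 := by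
  unfold nxtM; split_ifs <;> omega

theorem prvM_ok (m : ℤ) (h : 1 ≤ m ∧ m ≤ 12) : 1 ≤ prvM m ∧ prvM m ≤ 12 := by
  unfold prvM; split_ifs <;> omega

theorem prv_nxt (y m : ℤ) (h : 1 ≤ m ∧ m ≤ 12) :
    prvY (nxtY y m) (nxtM m) = y ∧ prvM (nxtM m) = m := by
  unfold prvY prvM nxtY nxtM; constructor <;> split_ifs <;> omega

theorem ad_in (y m d n : ℤ) (hm : 1 ≤ m ∧ m ≤ 12) (hd : 1 ≤ d ∧ d ≤ nbDays y m)
    (h : 1 ≤ d + n ∧ d + n ≤ nbDays y m) : addDays y m d n = .date y m (d + n) := by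
  rw [addDays, dif_pos hm, dif_pos hd, dif_pos h]

theorem ad_up (y m d n : ℤ) (hm : 1 ≤ m ∧ m ≤ 12) (hd : 1 ≤ d ∧ d ≤ nbDays y m)
    (h : nbDays y m < d + n) : addDays y m d n =
      addDays (nxtY y m) (nxtM m) 1 (n - (nbDays y m - d) - 1) := by
  rw [addDays, dif_pos hm, dif_pos hd, dif_neg (by omega), dif_pos h, am_nxt y m 1 hm]

theorem ad_down (y m d n : ℤ) (hm : 1 ≤ m ∧ m ≤ 12) (hd : 1 < d ∧ d ≤ nbDays y m)
    (h : d + n ≤ 0) : addDays y m d n = addDays y m 1 (d - 1 + n) := by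
  rw [addDays, dif_pos hm, dif_pos (by omega), dif_neg (by omega), dif_neg (by omega),
    dif_pos hd.1]

theorem ad_prev (y m n : ℤ) (hm : 1 ≤ m ∧ m ≤ 12) (h : n + 1 ≤ 0) :
    addDays y m 1 n =
      addDays (prvY y m) (prvM m) 1 (n + nbDays (prvY y m) (prvM m)) := by
  have := nbDays_bounds y m
  rw [addDays, dif_pos hm, dif_pos (by omega), dif_neg (by omega), dif_neg (by omega),
    dif_neg (by omega)]
  split
  · rename_i heq
    rw [am_prv y m 1 hm] at heq
    cases heq; rfl
  · rename_i heq
    rw [am_prv y m 1 hm] at heq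
    cases heq

theorem ad_last (y m n : ℤ) (hm : 1 ≤ m ∧ m ≤ 12) :
    addDays (nxtY y m) (nxtM m) 1 n = addDays y m (nbDays y m) (n + 1) := by
  have hb := nbDays_bounds y m
  by_cases hn : 0 ≤ n
  · rw [ad_up y m _ (n+1) hm (by omega) (by omega)]
    congr 1; ring
  · rw [ad_prev _ _ n (nxtM_ok m hm) (by omega), (prv_nxt y m hm).1, (prv_nxt y m hm).2]
    by_cases h1 : 1 ≤ nbDays y m + (n + 1)
    · rw [ad_in y m (nbDays y m) _ hm (by omega) (by omega),
        ad_in y m 1 _ hm (by omega) (by omega)]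
      congr 1; ring
    · rw [ad_down y m (nbDays y m) _ hm (by omega) (by omega)]
      congr 1; ring

theorem le_nxt (y m d : ℤ) :
    DValue.le (.date y m d) (.date (nxtY y m) (nxtM m) 1) := by
  simp only [DValue.le, DateLe, nxtY, nxtM]; split_ifs <;> omega

theorem prv_le (y m d : ℤ) :
    DValue.le (.date (prvY y m) (prvM m) d) (.date y m 1) := by
  simp only [DValue.le, DateLe, prvY, prvM]; split_ifs <;> omega

theorem ad_prev_one (y m : ℤ) (hm : 1 ≤ m ∧ m ≤ 12) :
    DValue.le (addDays y m 1 (-1)) (.date y m 1) := by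
  have hb := nbDays_bounds (prvY y m) (prvM m)
  rw [ad_prev y m _ hm (by omega), ad_in _ _ 1 _ (prvM_ok m hm) (by omega) (by omega)]
  exact prv_le _ _ _

theorem ad_succ (k : ℕ) : ∀ (y m d n : ℤ), (if 0 ≤ n then n else 62 - n).toNat = k →
    (1 ≤ m ∧ m ≤ 12) → (1 ≤ d ∧ d ≤ nbDays y m) →
    DValue.le (addDays y m d n) (addDays y m d (n + 1)) := by
  induction k using Nat.strong_induction_on with
  | _ k ih =>
  intro y m d n hk hm hd
  have hb := nbDays_bounds y m
  by_cases h1 : nbDays y m < d + n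
  · have hb' := nbDays_bounds (nxtY y m) (nxtM m)
    rw [ad_up y m d n hm hd h1, ad_up y m d (n+1) hm hd (by omega)]
    have := ih _ (by subst hk; split_ifs <;> omega) (nxtY y m) (nxtM m) 1
      (n - (nbDays y m - d) - 1) rfl (nxtM_ok m hm) (by omega)
    convert this using 2; ring
  by_cases h2 : 1 ≤ d + n
  · rw [ad_in y m d n hm hd (by omega)]
    by_cases h3 : d + n = nbDays y m
    · have hb' := nbDays_bounds (nxtY y m) (nxtM m)
      rw [ad_up y m d (n+1) hm hd (by omega),
        ad_in _ _ 1 _ (nxtM_ok m hm) (by omega) (by omega),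
        show 1 + (n + 1 - (nbDays y m - d) - 1) = 1 by omega]
      exact le_nxt _ _ _
    · rw [ad_in y m d (n+1) hm hd (by omega)]
      exact Or.inr ⟨rfl, Or.inr ⟨rfl, by omega⟩⟩
  by_cases h4 : d + n = 0
  · rw [ad_in y m d (n+1) hm hd (by omega), show d + (n+1) = 1 by omega]
    by_cases h5 : 1 < d
    · rw [ad_down y m d n hm (by omega) (by omega), show d - 1 + n = -1 by omega]
      exact ad_prev_one y m hm
    · rw [show d = 1 by omega, show n = -1 by omega]
      exact ad_prev_one y m hm
  by_cases h5 : 1 < d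
  · rw [ad_down y m d n hm (by omega) (by omega), ad_down y m d (n+1) hm (by omega) (by omega)]
    have := ih _ (by subst hk; split_ifs <;> omega) y m 1 (d - 1 + n) rfl hm (by omega)
    convert this using 2; ring
  · have hd1 : d = 1 := by omega
    subst hd1
    have hb' := nbDays_bounds (prvY y m) (prvM m)
    rw [ad_prev y m n hm (by omega), ad_prev y m (n+1) hm (by omega)]
    have := ih _ (by subst hk; split_ifs <;> omega) (prvY y m) (prvM m) 1
      (n + nbDays (prvY y m) (prvM m)) rfl (prvM_ok m hm) (by omega)
    convert this using 2; ring

theorem ad_ne_bot (y m d n : ℤ) (hm : 1 ≤ m ∧ m ≤ 12) (hd : 1 ≤ d ∧ d ≤ nbDays y m) :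
    DValue.le (addDays y m d n) (addDays y m d n) := by
  have := ad_succ _ y m d n rfl hm hd
  revert this
  cases addDays y m d n with
  | bot => simp [DValue.le]
  | date a b c => intro _; simp [DValue.le, DateLe]

/-- **Rounding comparison**: for every valid date `D` and every period
`p = (py, pm, pd)`, one has `D +↓ p ≤ D +↑ p`. -/
theorem rounding_comparison (y m d : ℤ) (p : Period) (h : ValidDate y m d) :
    DValue.le (addPeriod RMode.down (DValue.date y m d) p)
      (addPeriod RMode.up (DValue.date y m d) p) := by
  obtain ⟨hm1, hm2, hd1, hd2⟩ := h
  obtain ⟨y', m', he, hm'⟩ := addMonths_ex (y + p.py) m d p.pm ⟨hm1, hm2⟩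
  have hb := nbDays_bounds y' m'
  simp only [addPeriod, DValue.addY, DValue.addM, he, rnd]
  by_cases hd : 1 ≤ d ∧ d ≤ nbDays y' m'
  · simp only [if_pos hd, DValue.addD]
    exact ad_ne_bot y' m' d p.pd hm' hd
  · rw [if_neg hd, if_neg (by omega), if_neg hd, if_neg (by omega), am_nxt y' m' d hm']
    simp only [DValue.addD]
    rw [ad_last y' m' _ hm']
    exact ad_succ _ y' m' _ p.pd rfl hm' (by omega)
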